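/- Let n ≥ 2 and lambda = (lambda_1 > ... > lambda_n > 0) a strict partition. For every admissible pair (w,T) in A(lambda), ct(f(w,T)) = w(mu(T)) in Z^n. -/

import Mathlib

/-!
Let `J` be the set of selected positions in the chain. Write `Γ = (β_1, …, β_m)` and let `π_j` be `w` times the selected
reflections before position `j`.

Since `r̂_j(v) = r_j(v) + l_j β_j` and `(w r_j)(v) = w(r_j(v))` (`wAct_applyRefl`), applying `w` to
`μ(J)` and moving the reflections one at a time from the vector into the window gives
`w(μ(J)) = π_∞(λ) + ∑_{j ∈ J} l_j π_j(β_j)`. On the other side, the content of a column `π[1,k]` is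
`π(ω_k)` (`count_take_eq_wAct`), so the content of the compressed filling is half the sum, over
all blocks `Γ(λ'_i)` and both halves of each block, of `π_off(ω_{λ'_i})` with `off` the start of the
half-block. Replacing `π_off` by `π_∞` costs `⟨ω, β_j^∨⟩ π_j(β_j)` for each selected `j ≥ off`.
Since `λ = ∑_i ω_{λ'_i}` (`sum_omegaC`), the two sides agree once `2 l_j` is the sum of
`⟨ω_{λ'_i}, β_j^∨⟩` over all half-blocks that start at or before `j`; `two_mul_wAct_foldr` carries
out this telescoping.

The level identity is combinatorics of the chain. Within `Γ(k)` a root `β` occurs exactly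
`⟨ω_k, β^∨⟩` times (`count_gammaChain`), each half of `Γ(k)` is free of repetitions, and a root in
the first half has pairing `2` and recurs in the second half. Hence the identity holds inside one
block (`two_mul_lCount_gammaChain`), and by adding full earlier blocks it holds in `Γ`
(`two_mul_lCount_blocks`).
-/

open scoped BigOperators

namespace HL

/-! ### The order `≺` on nonzero integers in `[-n,n]`:
`1 ≺ 2 ≺ ... ≺ n ≺ -n ≺ -(n-1) ≺ ... ≺ -1`. -/

def slt (a b : ℤ) : Prop :=
  (0 < a ∧ b < 0) ∨ (0 < a ∧ 0 < b ∧ a < b) ∨ (a < 0 ∧ b < 0 ∧ a < b)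

instance slt.dec (a b : ℤ) : Decidable (slt a b) := by unfold slt; infer_instance

def sle (a b : ℤ) : Prop := slt a b ∨ a = b

instance sle.dec (a b : ℤ) : Decidable (sle a b) := by unfold sle; infer_instance

/-! ### Signed permutations (windows), reflections acting on the right -/

/-- The right action of a reflection on a window (or column), with 1-based
positions.  The reflection `(i, j)` with `j > 0` transposes positions `i` and
`j`; the reflection `(i, -j)` (i.e. `(i,\bar\jmath)`) with `i ≠ j` transposes
positions `i, j` and negates both entries; `(i, -i)` negates position `i`. -/
def applyRefl (l : List ℤ) (t : ℕ × ℤ) : List ℤ :=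
  if 0 < t.2 then
    (l.set (t.1 - 1) (l.getD (t.2.toNat - 1) 0)).set (t.2.toNat - 1) (l.getD (t.1 - 1) 0)
  else
    if t.1 = (-t.2).toNat then l.set (t.1 - 1) (-(l.getD (t.1 - 1) 0))
    else (l.set (t.1 - 1) (-(l.getD ((-t.2).toNat - 1) 0))).set ((-t.2).toNat - 1)
          (-(l.getD (t.1 - 1) 0))

def applyAll (w : List ℤ) (T : List (ℕ × ℤ)) : List ℤ := T.foldl applyRefl w

/-- The word `w[i,j] = w(i) w(i+1) ... w(j)`, 1-based and inclusive. -/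
def word (l : List ℤ) (i j : ℕ) : List ℤ := (l.drop (i - 1)).take (j + 1 - i)

/-- `N_{ab}(u)` = number of letters `c` of the word `u` with `a ≺ c ≺ b`. -/
def Nab (a b : ℤ) (u : List ℤ) : ℕ :=
  (u.filter (fun c => decide (slt a c ∧ slt c b))).length

/-- `ℓ₊(w) = #{(k,l) : k < l, w(k) ≻ w(l)}`. -/
def lplus (l : List ℤ) : ℕ :=
  (((Finset.range l.length) ×ˢ (Finset.range l.length)).filter
    (fun p => p.1 < p.2 ∧ slt (l.getD p.2 0) (l.getD p.1 0))).card

/-- `ℓ₋(w) = #{(k,l) : k ≤ l, w(k) ≻ -w(l)}`. -/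
def lminus (l : List ℤ) : ℕ :=
  (((Finset.range l.length) ×ˢ (Finset.range l.length)).filter
    (fun p => p.1 ≤ p.2 ∧ slt (-(l.getD p.2 0)) (l.getD p.1 0))).card

/-- The Coxeter length of a signed permutation given by its window. -/
def len (l : List ℤ) : ℕ := lplus l + lminus l

/-- The (finite) set of windows of all signed permutations in `B_n`. -/
def allWindows (n : ℕ) : Finset (List ℤ) :=
  Finset.image (fun w : Equiv.Perm (Fin n) × (Fin n → Bool) =>
    (List.finRange n).map (fun i =>
      if w.2 i then -(((w.1 i : ℕ) : ℤ) + 1) else ((w.1 i : ℕ) : ℤ) + 1)) Finset.univ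

/-- `w`-admissibility of a sequence of reflections: a strictly decreasing
chain in Bruhat order (recorded via the length function). -/
def decChain : List ℤ → List (ℕ × ℤ) → Bool
  | _, [] => true
  | w, t :: ts => (decide (len (applyRefl w t) < len w)) && decChain (applyRefl w t) ts

/-- Increasing-admissibility: a strictly increasing chain. -/
def incChain : List ℤ → List (ℕ × ℤ) → Bool
  | _, [] => true
  | w, t :: ts => (decide (len w < len (applyRefl w t))) && incChain (applyRefl w t) ts

/-- The subsequence of a chain `Γ` selected by a set `J` of (0-based) positions. -/
def selChain (Γ : List (ℕ × ℤ)) (J : Finset ℕ) : List (ℕ × ℤ) :=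
  (J.sort (· ≤ ·)).map (fun j => Γ.getD j (0, 0))

/-! ### The `λ`-chain of type `C_n` -/

/-- `Γ'_j = ((1,-j),(2,-j),...,(j-1,-j))`. -/
def gammaPrime (j : ℕ) : List (ℕ × ℤ) := (List.range (j - 1)).map (fun r => (r + 1, -(j : ℤ)))

/-- `Γ_j(k) = ((1,-j),...,(j-1,-j),(j,-(k+1)),...,(j,-n),(j,-j),(j,n),...,(j,k+1))`. -/
def gammaJK (n j k : ℕ) : List (ℕ × ℤ) :=
  gammaPrime j
    ++ (List.range (n - k)).map (fun r => (j, -((k + 1 + r : ℕ) : ℤ)))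
    ++ [(j, -(j : ℤ))]
    ++ (List.range (n - k)).map (fun r => (j, ((n - r : ℕ) : ℤ)))

/-- `Γ(k) = Γ'_2 ⋯ Γ'_k Γ_1(k) ⋯ Γ_k(k)` (type `C_n`). -/
def gammaChain (n k : ℕ) : List (ℕ × ℤ) :=
  ((List.range (k - 1)).map (fun r => gammaPrime (r + 2))).flatten
    ++ ((List.range k).map (fun r => gammaJK n (r + 1) k)).flatten

/-- `λ'_i = #{j : λ_j ≥ i}`, the conjugate partition. -/
def conj (n : ℕ) (lam : Fin n → ℕ) (i : ℕ) : ℕ :=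
  (Finset.univ.filter (fun j : Fin n => i ≤ lam j)).card

/-- `λ_1`, the largest part. -/
def lamOne (n : ℕ) (lam : Fin n → ℕ) : ℕ := Finset.univ.sup lam

/-- The fixed `λ`-chain `Γ = Γ^{λ_1} Γ^{λ_1-1} ⋯ Γ^1` with `Γ^i = Γ(λ'_i)`. -/
def lambdaChain (n : ℕ) (lam : Fin n → ℕ) : List (ℕ × ℤ) :=
  ((List.range (lamOne n lam)).map
    (fun r => gammaChain n (conj n lam (lamOne n lam - r)))).flatten

/-- The set `A(λ)` of admissible pairs `(w, J)`. -/
def ASet (n : ℕ) (lam : Fin n → ℕ) : Set (List ℤ × Finset ℕ) :=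
  {p | p.1 ∈ allWindows n ∧ p.2 ⊆ Finset.range (lambdaChain n lam).length ∧
    decChain p.1 (selChain (lambdaChain n lam) p.2) = true}

/-! ### Roots, coroots, affine reflections, and the weight `μ(T)` -/

/-- The root of type `C_n` corresponding to a symbol: `(i,j) ↦ ε_i - ε_j`,
`(i,-j) ↦ ε_i + ε_j` for `i < j`, and `(i,-i) ↦ 2ε_i`. -/
def rootVec (n : ℕ) (β : ℕ × ℤ) : Fin n → ℤ := fun r =>
  (if ((r : ℕ) + 1 : ℤ) = (β.1 : ℤ) then 1 else 0) +
  (if 0 < β.2 then (if ((r : ℕ) + 1 : ℤ) = β.2 then -1 else 0)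
   else (if ((r : ℕ) + 1 : ℤ) = -β.2 then 1 else 0))

/-- The coroot (type `C_n`): `(2ε_i)^∨ = ε_i`, the long rootss are unchanged. -/
def corootVec (n : ℕ) (β : ℕ × ℤ) : Fin n → ℤ :=
  if β.2 = -(β.1 : ℤ) then (fun r => if ((r : ℕ) + 1 : ℤ) = (β.1 : ℤ) then 1 else 0)
  else rootVec n β

/-- Standard inner product on `ℤ^n`. -/
def ip (n : ℕ) (u v : Fin n → ℤ) : ℤ := ∑ r, u r * v r

/-- The affine reflection in the hyperplane `{v : ⟨v, β^∨⟩ = c}`. -/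
def affRefl (n : ℕ) (β : ℕ × ℤ) (c : ℤ) (v : Fin n → ℤ) : Fin n → ℤ :=
  fun r => v r - (ip n v (corootVec n β) - c) * rootVec n β r

/-- `l_k = #{j ≤ k : β_j = β_k}` (here `k` is 0-based). -/
def lCount (Γ : List (ℕ × ℤ)) (k : ℕ) : ℕ := (Γ.take (k + 1)).count (Γ.getD k (0, 0))

/-- `μ(J) = \hat r_{j_1} ⋯ \hat r_{j_s}(λ)` for `J = {j_1 < ... < j_s}`. -/
def muJ (n : ℕ) (Γ : List (ℕ × ℤ)) (lamVec : Fin n → ℤ) (J : Finset ℕ) : Fin n → ℤ :=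
  (J.sort (· ≤ ·)).foldr (fun j v => affRefl n (Γ.getD j (0, 0)) ((lCount Γ j : ℕ) : ℤ) v) lamVec

/-- The linear action of a signed permutation (given by its window) on `ℤ^n`:
`w(ε_i) = ε_{w(i)}` with `ε_{-i} = -ε_i`. -/
def wAct (n : ℕ) (w : List ℤ) (v : Fin n → ℤ) : Fin n → ℤ := fun r =>
  ∑ i : Fin n, ((if w.getD i 0 = ((r : ℕ) + 1 : ℤ) then v i else 0) +
    (if w.getD i 0 = -(((r : ℕ) + 1 : ℤ)) then -(v i) else 0))

def lamVec (n : ℕ) (lam : Fin n → ℕ) : Fin n → ℤ := fun i => (lam i : ℤ)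

/-! ### Fillings of the doubled shape `\hat λ` -/

/-- A filling of the doubled shape, recorded by its primed columns `C'_{i,k}`
(`Cp i k`) and unprimed columns `C_{i,j}` (`Cu i j`). -/
structure Filling where
  Cp : ℕ → ℕ → List ℤ
  Cu : ℕ → ℕ → List ℤ

def validP (n : ℕ) (lam : Fin n → ℕ) (i k : ℕ) : Prop :=
  1 ≤ i ∧ i ≤ lamOne n lam ∧ 2 ≤ k ∧ k ≤ conj n lam i

def validU (n : ℕ) (lam : Fin n → ℕ) (i j : ℕ) : Prop :=
  1 ≤ i ∧ i ≤ lamOne n lam ∧ 1 ≤ j ∧ j ≤ conj n lam i ∧ (i = 1 → j = 1)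

instance validP.dec (n : ℕ) (lam : Fin n → ℕ) (i k : ℕ) : Decidable (validP n lam i k) := by
  unfold validP; infer_instance

instance validU.dec (n : ℕ) (lam : Fin n → ℕ) (i j : ℕ) : Decidable (validU n lam i j) := by
  unfold validU; infer_instance

/-- The right neighbour `C'_{i,k+1}` of `C'_{i,k}`, with the convention
`C'_{i,λ'_i+1} = C_{i,1}`. -/
def CpNxt (n : ℕ) (lam : Fin n → ℕ) (F : Filling) (i k : ℕ) : List ℤ :=
  if k < conj n lam i then F.Cp i (k + 1) else F.Cu i 1

/-- The right neighbour `C_{i,j+1}` of `C_{i,j}`, with the conventions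
`C_{i,λ'_i+1} = C'_{i-1,2}` (if `λ'_{i-1} > 1`) and `C_{i,λ'_i+1} = C_{i-1,1}`
(if `λ'_{i-1} = 1`). -/
def CuNxt (n : ℕ) (lam : Fin n → ℕ) (F : Filling) (i j : ℕ) : List ℤ :=
  if j < conj n lam i then F.Cu i (j + 1)
  else if 2 ≤ conj n lam (i - 1) then F.Cp (i - 1) 2 else F.Cu (i - 1) 1

/-- No two entries `a, b` of a column with `a = ±b`. -/
def colDistinct (c : List ℤ) : Prop :=
  ∀ p q : ℕ, p < q → q < c.length →
    c.getD p 0 ≠ c.getD q 0 ∧ c.getD p 0 ≠ -(c.getD q 0)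

/-- `R = (r_1 < r_2 < ... < r_p)` with `1 ≤ r_t < j ≤ d`. -/
def sortedR (R : List ℕ) (j d : ℕ) : Prop :=
  List.Chain' (· < ·) R ∧ (∀ r ∈ R, 1 ≤ r ∧ r < j) ∧ 1 ≤ j ∧ j ≤ d

/-- `D (r_1,-j) (r_2,-j) ⋯ (r_p,-j)`. -/
def cycleApply (D : List ℤ) (R : List ℕ) (j : ℕ) : List ℤ :=
  R.foldl (fun E r => applyRefl E (r, -(j : ℤ))) D

/-- The relation between `C_{i,j+1}[1,λ'_i] = E` and `C_{i,j} = D` in a filling: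
`E` differs from `D' = D(r_1,-j)⋯(r_p,-j)` only in position `j`,
`E(j) ∉ {±D'(r) : r ≠ j}` and `E(j) ⪯ D'(j)`. -/
def unprimedTrans (D E : List ℤ) (R : List ℕ) (j d : ℕ) : Prop :=
  (∀ r, 1 ≤ r → r ≤ d → r ≠ j →
    E.getD (r - 1) 0 = (cycleApply D R j).getD (r - 1) 0) ∧
  (∀ r, 1 ≤ r → r ≤ d → r ≠ j →
    E.getD (j - 1) 0 ≠ (cycleApply D R j).getD (r - 1) 0 ∧
    E.getD (j - 1) 0 ≠ -((cycleApply D R j).getD (r - 1) 0)) ∧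
  sle (E.getD (j - 1) 0) ((cycleApply D R j).getD (j - 1) 0)

/-- The set `F(λ)` of fillings of the doubled shape `\hat λ`. -/
def FSet (n : ℕ) (lam : Fin n → ℕ) : Set Filling :=
  {F |
    -- shape
    (∀ i k, (validP n lam i k → (F.Cp i k).length = conj n lam i) ∧
      (¬ validP n lam i k → F.Cp i k = [])) ∧
    (∀ i j, (validU n lam i j → (F.Cu i j).length = conj n lam i) ∧
      (¬ validU n lam i j → F.Cu i j = [])) ∧
    -- entries lie in `{±1, ..., ±n}`
    (∀ i k, validP n lam i k → ∀ a ∈ F.Cp i k, 1 ≤ a.natAbs ∧ a.natAbs ≤ n) ∧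
    (∀ i j, validU n lam i j → ∀ a ∈ F.Cu i j, 1 ≤ a.natAbs ∧ a.natAbs ≤ n) ∧
    -- (1) rows weakly decrease from left to right
    (∀ i k, validP n lam i k → ∀ r, 1 ≤ r → r ≤ conj n lam i →
      sle ((CpNxt n lam F i k).getD (r - 1) 0) ((F.Cp i k).getD (r - 1) 0)) ∧
    (∀ i j, 2 ≤ i → validU n lam i j → ∀ r, 1 ≤ r → r ≤ conj n lam i →
      sle ((CuNxt n lam F i j).getD (r - 1) 0) ((F.Cu i j).getD (r - 1) 0)) ∧
    -- (2) no column contains `a, b` with `a = ±b`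
    (∀ i k, validP n lam i k → colDistinct (F.Cp i k)) ∧
    (∀ i j, validU n lam i j → colDistinct (F.Cu i j)) ∧
    -- (3) primed transitions: `C'_{i,k+1} = C'_{i,k}(r_1,-k)⋯(r_p,-k)`
    (∀ i k, validP n lam i k → ∃ R : List ℕ, sortedR R k (conj n lam i) ∧
      CpNxt n lam F i k = cycleApply (F.Cp i k) R k) ∧
    -- (3) unprimed transitions
    (∀ i j, 2 ≤ i → validU n lam i j → ∃ R : List ℕ, sortedR R j (conj n lam i) ∧
      unprimedTrans (F.Cu i j) ((CuNxt n lam F i j).take (conj n lam i)) R j (conj n lam i))}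

/-! ### The filling map `f` -/

/-- Offset in `Γ` of the beginning of block `Γ^i` (the blocks are listed for
`i = λ_1` down to `1`). -/
def offsetBlock (n : ℕ) (lam : Fin n → ℕ) (i : ℕ) : ℕ :=
  ∑ r ∈ Finset.Ico (i + 1) (lamOne n lam + 1), (gammaChain n (conj n lam r)).length

/-- Offset in `Γ` of the beginning of the factor `Γ'_{i,k}`.-/
def offsetP (n : ℕ) (lam : Fin n → ℕ) (i k : ℕ) : ℕ :=
  offsetBlock n lam i + ∑ j ∈ Finset.Ico 2 k, (gammaPrime j).length

/-- Offset in `Γ` of the beginning of the factor `Γ_{i,j}`.-/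
def offsetU (n : ℕ) (lam : Fin n → ℕ) (i j : ℕ) : ℕ :=
  offsetBlock n lam i + (∑ k ∈ Finset.Ico 2 (conj n lam i + 1), (gammaPrime k).length)
    + ∑ j' ∈ Finset.Ico 1 j, (gammaJK n j' (conj n lam i)).length

/-- `π = w ⋅ (all selected reflections at positions < off)`. -/
def piW (n : ℕ) (lam : Fin n → ℕ) (w : List ℤ) (J : Finset ℕ) (off : ℕ) : List ℤ :=
  applyAll w (selChain (lambdaChain n lam) (J.filter (fun x => x < off)))

/-- The filling map `f`, sending an (admissible) pair `(w, J)` to a filling of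
the doubled shape `\hat λ`. -/
def fMap (n : ℕ) (lam : Fin n → ℕ) (w : List ℤ) (J : Finset ℕ) : Filling where
  Cp := fun i k => if validP n lam i k
    then (piW n lam w J (offsetP n lam i k)).take (conj n lam i) else []
  Cu := fun i j => if validU n lam i j
    then (piW n lam w J (offsetU n lam i j)).take (conj n lam i) else []

/-! ### Content of a filling -/

/-- The columns `\bar{C}^i = C'_{i,2} C_{i,1}` (left to right, `i = λ_1, ..., 1`)
of the compressed filling `\barσ` of shape `2λ`; by the conventions,
`C'_{i,2} = C_{i,1}` when `λ'_i = 1`. -/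
def compCols (n : ℕ) (lam : Fin n → ℕ) (F : Filling) : List (List ℤ) :=
  ((List.range (lamOne n lam)).map (fun t =>
    [(if 2 ≤ conj n lam (lamOne n lam - t) then F.Cp (lamOne n lam - t) 2
      else F.Cu (lamOne n lam - t) 1), F.Cu (lamOne n lam - t) 1])).flatten

/-- The content of a list of columns: the `i`-th coordinate is half the
difference between the numbers of occurrences of `i` and of `-i`. -/
def ctCols (n : ℕ) (cols : List (List ℤ)) : Fin n → ℚ := fun r =>
  ((cols.flatten.count (((r : ℕ) + 1 : ℕ) : ℤ) : ℚ) -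
    (cols.flatten.count (-(((r : ℕ) + 1 : ℕ) : ℤ)) : ℚ)) / 2

/-- The content `ct(σ)` of a filling `σ` of `\hatλ`. -/
def ctQ (n : ℕ) (lam : Fin n → ℕ) (F : Filling) : Fin n → ℚ :=
  ctCols n (compCols n lam F)

/-! ### The statistics `N(D,C)` and `des(D,C)` -/

/-- `σ_{ab} = 1` if `a` and `b` are both negative, else `0`. -/
def sigmaAB (a b : ℤ) : ℕ := if a < 0 ∧ b < 0 then 1 else 0

def allEntries (n : ℕ) : List ℤ :=
  (List.range n).map (fun r => ((r + 1 : ℕ) : ℤ)) ++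
    (List.range n).map (fun r => -((r + 1 : ℕ) : ℤ))

/-- Case 1: `N(D, D(r,-j)) = N_{\bar b, a}(D[r+1,j-1]) +
#{c : \bar b ≺ c ≺ a, c ∉ ±D[1,j]} + σ_{ab}` where `a = D(r)`, `b = D(j)`. -/
def N1 (n : ℕ) (D : List ℤ) (r j : ℕ) : ℕ :=
  Nab (-(D.getD (j - 1) 0)) (D.getD (r - 1) 0) (word D (r + 1) (j - 1)) +
  ((allEntries n).filter (fun c => decide (slt (-(D.getD (j - 1) 0)) c ∧
    slt c (D.getD (r - 1) 0) ∧ c ∉ D.take j ∧ c ∉ (D.take j).map (fun x => -x)))).length +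
  sigmaAB (D.getD (r - 1) 0) (D.getD (j - 1) 0)

/-- Case 2: `N(D, D(r_1,-j)⋯(r_p,-j)) = ∑ N(D_{t-1}, D_t)`. -/
def cycleN (n : ℕ) : List ℤ → List ℕ → ℕ → ℕ
  | _, [], _ => 0
  | D, r :: rs, j => N1 n D r j + cycleN n (applyRefl D (r, -(j : ℤ))) rs j

/-- The possible values `(N(D,C), des(D,C))` arising from the case-by-case
definition of the statistics (cases 0, 2, 3; case 1 is case 2 with `p = 1`).
If `C` is one box taller than `D`, `C` is replaced by `C[1,d]`. -/
def NdesCand (n : ℕ) (D C : List ℤ) : Set (ℕ × ℕ) :=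
  {x |
    (C.take D.length = D ∧ x = (0, 0)) ∨
    (∃ j R, sortedR R j D.length ∧ R ≠ [] ∧ C.take D.length = cycleApply D R j ∧
      x = (cycleN n D R j, R.length)) ∨
    (∃ j R, sortedR R j D.length ∧
      (∀ r, 1 ≤ r → r ≤ D.length → r ≠ j →
        (C.take D.length).getD (r - 1) 0 = (cycleApply D R j).getD (r - 1) 0) ∧
      (∀ r, 1 ≤ r → r ≤ D.length → r ≠ j →
        (C.take D.length).getD (j - 1) 0 ≠ (cycleApply D R j).getD (r - 1) 0 ∧
        (C.take D.length).getD (j - 1) 0 ≠ -((cycleApply D R j).getD (r - 1) 0)) ∧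
      slt ((C.take D.length).getD (j - 1) 0) ((cycleApply D R j).getD (j - 1) 0) ∧
      x = (cycleN n D R j +
        Nab ((C.take D.length).getD (j - 1) 0) ((cycleApply D R j).getD (j - 1) 0)
          (word D (j + 1) D.length), R.length + 1))}

noncomputable def Nstat (n : ℕ) (D C : List ℤ) : ℕ :=
  sInf {v | ∃ d, (v, d) ∈ NdesCand n D C}

noncomputable def desStat (n : ℕ) (D C : List ℤ) : ℕ :=
  sInf {d | ∃ v, (v, d) ∈ NdesCand n D C}

/-- All columns of a filling of `\hatλ`, listed from left to right. -/
def colList (n : ℕ) (lam : Fin n → ℕ) (F : Filling) : List (List ℤ) :=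
  ((List.range (lamOne n lam)).map (fun t =>
    ((List.range (conj n lam (lamOne n lam - t) - 1)).map
      (fun s => F.Cp (lamOne n lam - t) (s + 2))) ++
    (if lamOne n lam - t = 1 then [F.Cu 1 1]
     else (List.range (conj n lam (lamOne n lam - t))).map
      (fun s => F.Cu (lamOne n lam - t) (s + 1))))).flatten

/-- Sum of a binary statistic over adjacent pairs of a list. -/
def adjSumN (f : List ℤ → List ℤ → ℕ) : List (List ℤ) → ℕ
  | a :: b :: rest => f a b + adjSumN f (b :: rest)
  | _ => 0

/-- `N(σ) = ∑_{i=1}^{m-1} N(C_{i+1}, C_i) + ℓ₊(C_1)`. -/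
noncomputable def Nsigma (n : ℕ) (lam : Fin n → ℕ) (F : Filling) : ℕ :=
  adjSumN (Nstat n) (colList n lam F) + lplus ((colList n lam F).getLastD [])

/-- `des(σ) = ∑_{i=1}^{m-1} des(C_{i+1}, C_i)`. -/
noncomputable def desSigma (n : ℕ) (lam : Fin n → ℕ) (F : Filling) : ℕ :=
  adjSumN (desStat n) (colList n lam F)

/-! ### Statistics on fillings of the plain shape `λ` (for Proposition 2.2) -/

/-- The descent statistic of a filling of the Young diagram of `λ`, whose
columns are listed from left to right. -/
def desTau (cols : List (List ℤ)) : ℕ :=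
  adjSumN (fun L R => ((Finset.range L.length).filter
    (fun r => slt (R.getD r 0) (L.getD r 0))).card) cols

/-- The complementary inversion statistic `cinv = n(λ) - inv` of a filling of
the Young diagram of `λ` (columns listed from left to right, `C_k` being the
`k`-th column from the right). -/
def cinvTau (cols : List (List ℤ)) : ℕ :=
  ∑ q ∈ Finset.range cols.length,
    (((Finset.range (cols.getD q []).length) ×ˢ (Finset.range (cols.getD q []).length)).filter
      (fun pp => pp.1 < pp.2 ∧
        (((1 ≤ q ∧ pp.2 < (cols.getD (q - 1) []).length) ∧
            slt ((cols.getD q []).getD pp.2 0) ((cols.getD q []).getD pp.1 0) ∧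
            slt ((cols.getD q []).getD pp.1 0) ((cols.getD (q - 1) []).getD pp.2 0)) ∨
          (¬ (1 ≤ q ∧ pp.2 < (cols.getD (q - 1) []).length) ∧
            slt ((cols.getD q []).getD pp.2 0) ((cols.getD q []).getD pp.1 0))))).card

/-! ### Chains for the root systems `C_n` and `B_n` and the conditions (R1), (R2) -/

def isPosRootC (n : ℕ) (β : ℕ × ℤ) : Prop :=
  (1 ≤ β.1 ∧ (β.1 : ℤ) < β.2 ∧ β.2 ≤ (n : ℤ)) ∨
  (1 ≤ β.1 ∧ 0 < -β.2 ∧ (β.1 : ℤ) ≤ -β.2 ∧ -β.2 ≤ (n : ℤ))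

/-- Positive roots of `B_n` use the same symbols; `(i,-i)` encodes `ε_i`. -/
def isPosRootB (n : ℕ) (β : ℕ × ℤ) : Prop := isPosRootC n β

/-- The root of type `B_n` of a symbol: as in type `C` except `(i,-i) ↦ ε_i`. -/
def rootVecB (n : ℕ) (β : ℕ × ℤ) : Fin n → ℤ :=
  if β.2 = -(β.1 : ℤ) then (fun r => if ((r : ℕ) + 1 : ℤ) = (β.1 : ℤ) then 1 else 0)
  else rootVec n β

/-- The coroot of type `B_n`: `ε_i^∨ = 2ε_i`, long roots unchanged. -/
def corootVecB (n : ℕ) (β : ℕ × ℤ) : Fin n → ℤ :=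
  if β.2 = -(β.1 : ℤ) then (fun r => if ((r : ℕ) + 1 : ℤ) = (β.1 : ℤ) then 2 else 0)
  else rootVec n β

/-- `ω_k` in type `C_n`. -/
def omegaC (n k : ℕ) : Fin n → ℤ := fun r => if (r : ℕ) + 1 ≤ k then 1 else 0

/-- `ω_k` in type `B_n` (`ω_n` is half the sum of the `ε_i`). -/
def omegaB (n k : ℕ) : Fin n → ℚ :=
  if k = n then (fun _ => 1/2) else (fun r => if (r : ℕ) + 1 ≤ k then 1 else 0)

/-- type `B`: `Γ'_j = ((1,-j),...,(j-1,-j),(j))`. -/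
def gammaPrimeB (j : ℕ) : List (ℕ × ℤ) := gammaPrime j ++ [(j, -(j : ℤ))]

/-- type `B`: `Γ(k) = Γ'_1 ⋯ Γ'_k Γ_1(k) ⋯ Γ_k(k)` for `k < n`, and
`Γ(n) = Γ'_1 ⋯ Γ'_n`. -/
def gammaChainB (n k : ℕ) : List (ℕ × ℤ) :=
  ((List.range k).map (fun r => gammaPrimeB (r + 1))).flatten
    ++ (if k = n then [] else ((List.range k).map (fun r => gammaJK n (r + 1) k)).flatten)

/-- `(R2)`: the subsequence of all occurrences of `α, β, γ` is a concatenation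
of consecutive pairs `(γ, α)` or `(γ, β)`. -/
def altPairs (g a b : ℕ × ℤ) : List (ℕ × ℤ) → Prop
  | [] => True
  | [_] => False
  | x :: y :: rest => x = g ∧ (y = a ∨ y = b) ∧ altPairs g a b rest

/-! ### Real vector space versions (for hyperplanes) -/

def ipR (n : ℕ) (u v : Fin n → ℝ) : ℝ := ∑ r, u r * v r

def affReflR (n : ℕ) (β : ℕ × ℤ) (c : ℝ) (v : Fin n → ℝ) : Fin n → ℝ :=
  fun r => v r - (ipR n v (fun s => ((corootVec n β s : ℤ) : ℝ)) - c) *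
    ((rootVec n β r : ℤ) : ℝ)

def wActR (n : ℕ) (w : List ℤ) (v : Fin n → ℝ) : Fin n → ℝ := fun r =>
  ∑ i : Fin n, ((if w.getD i 0 = ((r : ℕ) + 1 : ℤ) then v i else 0) +
    (if w.getD i 0 = -(((r : ℕ) + 1 : ℤ)) then -(v i) else 0))

/-- `γ^∨ = (2/⟨γ,γ⟩) γ`. -/
noncomputable def corootOfR (n : ℕ) (v : Fin n → ℝ) : Fin n → ℝ :=
  fun r => (2 / ipR n v v) * v r

/-- The part of the compressed filling of shape `2λ` consisting of the columns
numbered `2λ_1, 2λ_1 - 1, ..., q` (`\barσ[q]`); column `2i` is `C'_{i,2}` and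
column `2i-1` is `C_{i,1}`. -/
def compColsGe (n : ℕ) (lam : Fin n → ℕ) (F : Filling) (q : ℕ) : List (List ℤ) :=
  ((List.range (lamOne n lam)).map (fun t =>
    (if q ≤ 2 * (lamOne n lam - t) then
      [(if 2 ≤ conj n lam (lamOne n lam - t) then F.Cp (lamOne n lam - t) 2
        else F.Cu (lamOne n lam - t) 1)] else []) ++
    (if q ≤ 2 * (lamOne n lam - t) - 1 then [F.Cu (lamOne n lam - t) 1] else []))).flatten

/-! ### The chains `Δ` and `Φ` of Section 6 -/

/-- `Δ = ((1,p+1),...,(1,n),(1,-1),(1,-n),(1,-(n-1)),...,(1,-(p+1)))`. -/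
def deltaChain (n p : ℕ) : List (ℕ × ℤ) :=
  (List.range (n - p)).map (fun r => (1, ((p + 1 + r : ℕ) : ℤ)))
    ++ [(1, (-1 : ℤ))]
    ++ (List.range (n - p)).map (fun r => (1, -((n - r : ℕ) : ℤ)))

/-- The suffix `Δ_{\bar s}` of `Δ` beginning with `(1,-s)`. -/
def deltaSuffixNeg (p s : ℕ) : List (ℕ × ℤ) :=
  (List.range (s - p)).map (fun r => (1, -((s - r : ℕ) : ℤ)))

/-- The suffix `Δ_{\bar 1}` of `Δ` beginning with `(1,-1)`. -/
def deltaSuffixBar1 (n p : ℕ) : List (ℕ × ℤ) :=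
  [(1, (-1 : ℤ))] ++ (List.range (n - p)).map (fun r => (1, -((n - r : ℕ) : ℤ)))

/-- The suffix `Δ_s` of `Δ` beginning with `(1,s)` (for `p < s ≤ n`). -/
def deltaSuffixPos (n p s : ℕ) : List (ℕ × ℤ) :=
  (List.range (n + 1 - s)).map (fun r => (1, ((s + r : ℕ) : ℤ)))
    ++ [(1, (-1 : ℤ))]
    ++ (List.range (n - p)).map (fun r => (1, -((n - r : ℕ) : ℤ)))

/-- `Φ = ((1,-1),(1,-2),(2,-2),...,(1,-n),...,(n-1,-n),(n,-n))`. -/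
def phiChain (n : ℕ) : List (ℕ × ℤ) :=
  ((List.range n).map (fun jm =>
    (List.range (jm + 1)).map (fun im => (im + 1, -((jm + 1 : ℕ) : ℤ))))).flatten

/-- The suffix `Φ_{ij}` of `Φ` beginning with `(i,-j)`. -/
def phiSuffix (n i j : ℕ) : List (ℕ × ℤ) := (phiChain n).drop ((j - 1) * j / 2 + (i - 1))

/-- `ℓ^{ij}_-(w) = #{(k,l) : k ≤ l, (k,-l)` strictly precedes `(i,-j)` in `Φ`,
`w(k) ≻ -w(l)}`. -/
def lminusBefore (w : List ℤ) (i j : ℕ) : ℕ :=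
  (((Finset.range w.length) ×ˢ (Finset.range w.length)).filter
    (fun p => p.1 ≤ p.2 ∧ (p.2 + 1 < j ∨ (p.2 + 1 = j ∧ p.1 + 1 < i)) ∧
      slt (-(w.getD p.2 0)) (w.getD p.1 0))).card



/-! ### The reflection action on windows and on vectors -/

/-- The `r`-th coordinate of `ε_a`, where `ε_{-a} = -ε_a`; an odd function of `a`. -/
def epsCoord (r : ℕ) (a : ℤ) : ℤ :=
  (if a = (r : ℤ) + 1 then 1 else 0) - (if a = -((r : ℤ) + 1) then 1 else 0)

lemma epsCoord_neg (r : ℕ) (a : ℤ) : epsCoord r (-a) = -epsCoord r a := by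
  unfold epsCoord
  split_ifs <;> omega

lemma wAct_eq_sum (n : ℕ) (w : List ℤ) (v : Fin n → ℤ) (r : Fin n) :
    wAct n w v r = ∑ i : Fin n, v i * epsCoord r (w.getD i 0) := by
  unfold wAct epsCoord
  refine Finset.sum_congr rfl fun i _ => ?_
  split_ifs <;> simp

lemma wAct_sub_mul (n : ℕ) (w : List ℤ) (u v : Fin n → ℤ) (c : ℤ) (r : Fin n) :
    wAct n w (fun i => u i - c * v i) r = wAct n w u r - c * wAct n w v r := by
  simp only [wAct_eq_sum, Finset.mul_sum, ← Finset.sum_sub_distrib]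
  refine Finset.sum_congr rfl fun i _ => ?_
  ring

/-- The linear reflection in the root `β`. -/
def linRefl (n : ℕ) (β : ℕ × ℤ) (v : Fin n → ℤ) : Fin n → ℤ :=
  fun r => v r - ip n v (corootVec n β) * rootVec n β r

/-- The three shapes of a positive root of type `C_n`, with 0-based indices. -/
lemma isPosRootC_cases {n : ℕ} {β : ℕ × ℤ} (h : isPosRootC n β) :
    (∃ a b : Fin n, a < b ∧ β = ((a : ℕ) + 1, ((b : ℕ) : ℤ) + 1)) ∨
    (∃ a b : Fin n, a < b ∧ β = ((a : ℕ) + 1, -(((b : ℕ) : ℤ) + 1))) ∨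
    (∃ a : Fin n, β = ((a : ℕ) + 1, -(((a : ℕ) : ℤ) + 1))) := by
  obtain ⟨i, j⟩ := β
  unfold isPosRootC at h
  simp only at h
  rcases h with ⟨h1, h2, h3⟩ | ⟨h1, h2, h3, h4⟩
  · left
    refine ⟨⟨i - 1, by omega⟩, ⟨j.toNat - 1, by omega⟩, ?_, ?_⟩
    · simp only [Fin.mk_lt_mk]; omega
    · simp only [Prod.mk.injEq]; omega
  · right
    by_cases hij : (i : ℤ) = -j
    · right
      refine ⟨⟨i - 1, by omega⟩, ?_⟩
      simp only [Prod.mk.injEq]; omega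
    · left
      refine ⟨⟨i - 1, by omega⟩, ⟨(-j).toNat - 1, by omega⟩, ?_, ?_⟩
      · simp only [Fin.mk_lt_mk]; omega
      · simp only [Prod.mk.injEq]; omega

lemma rootVec_pos {n : ℕ} (a b : Fin n) :
    rootVec n ((a : ℕ) + 1, ((b : ℕ) : ℤ) + 1) =
      fun r => (if r = a then 1 else 0) - (if r = b then 1 else 0) := by
  funext r
  have h : (0 : ℤ) < ((b : ℕ) : ℤ) + 1 := by omega
  simp only [rootVec, h, if_true, Fin.ext_iff]
  split_ifs <;> omega

lemma rootVec_neg {n : ℕ} (a b : Fin n) :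
    rootVec n ((a : ℕ) + 1, -(((b : ℕ) : ℤ) + 1)) =
      fun r => (if r = a then 1 else 0) + (if r = b then 1 else 0) := by
  funext r
  have h : ¬ (0 : ℤ) < -(((b : ℕ) : ℤ) + 1) := by omega
  simp only [rootVec, h, if_false, Fin.ext_iff]
  split_ifs <;> omega

lemma ip_coroot_pos {n : ℕ} (a b : Fin n) (v : Fin n → ℤ) :
    ip n v (corootVec n ((a : ℕ) + 1, ((b : ℕ) : ℤ) + 1)) = v a - v b := by
  have h : ¬ (((b : ℕ) : ℤ) + 1 = -((((a : ℕ) + 1 : ℕ)) : ℤ)) := by omega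
  simp only [corootVec, h, if_false, rootVec_pos, ip]
  simp [mul_sub, Finset.sum_sub_distrib]

lemma ip_coroot_neg {n : ℕ} (a b : Fin n) (hab : a < b) (v : Fin n → ℤ) :
    ip n v (corootVec n ((a : ℕ) + 1, -(((b : ℕ) : ℤ) + 1))) = v a + v b := by
  have h : ¬ (-(((b : ℕ) : ℤ) + 1) = -((((a : ℕ) + 1 : ℕ)) : ℤ)) := by
    have : (a : ℕ) < b := hab
    omega
  simp only [corootVec, h, if_false, rootVec_neg, ip]
  simp [mul_add, Finset.sum_add_distrib]

lemma ip_coroot_diag {n : ℕ} (a : Fin n) (v : Fin n → ℤ) :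
    ip n v (corootVec n ((a : ℕ) + 1, -(((a : ℕ) : ℤ) + 1))) = v a := by
  have h : -(((a : ℕ) : ℤ) + 1) = -((((a : ℕ) + 1 : ℕ)) : ℤ) := by omega
  have h2 : ∀ r : Fin n, (((r : ℕ) : ℤ) + 1 = (((a : ℕ) + 1 : ℕ) : ℤ)) ↔ r = a := by
    intro r; rw [Fin.ext_iff]; omega
  simp only [corootVec, h, if_true, ip, h2]
  simp

lemma length_applyRefl (w : List ℤ) (t : ℕ × ℤ) : (applyRefl w t).length = w.length := by
  unfold applyRefl
  split_ifs <;> simp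

lemma getD_set_eq (w : List ℤ) (a i : ℕ) (x : ℤ) (hi : i < w.length) :
    (w.set a x).getD i 0 = if a = i then x else w.getD i 0 := by
  simp [List.getD_eq_getElem?_getD, List.getElem?_set]
  split_ifs <;> simp_all

/-- The right action of a reflection on windows is the reflection acting first on vectors:
`(w t)(v) = w(t(v))`. -/
lemma wAct_applyRefl {n : ℕ} {β : ℕ × ℤ} (hβ : isPosRootC n β) (w : List ℤ)
    (hw : w.length = n) (v : Fin n → ℤ) (r : Fin n) :
    wAct n (applyRefl w β) v r = wAct n w (linRefl n β v) r := by
  rw [wAct_eq_sum, wAct_eq_sum]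
  unfold linRefl
  -- the entries at the (at most two) affected positions are separated off by Kronecker deltas
  rcases isPosRootC_cases hβ with ⟨a, b, hab, rfl⟩ | ⟨a, b, hab, rfl⟩ | ⟨a, rfl⟩
  · have hne : (b : ℕ) ≠ a := by have : (a : ℕ) < b := hab; omega
    have hent : ∀ i : Fin n, (applyRefl w ((a : ℕ) + 1, ((b : ℕ) : ℤ) + 1)).getD i 0 =
        if (b : ℕ) = i then w.getD a 0 else if (a : ℕ) = i then w.getD b 0 else w.getD i 0 := by
      intro i
      have h : (0 : ℤ) < ((b : ℕ) : ℤ) + 1 := by omega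
      have h2 : (((b : ℕ) : ℤ) + 1).toNat - 1 = b := by omega
      simp only [applyRefl, h, if_true, h2, Nat.add_sub_cancel]
      rw [getD_set_eq _ _ _ _ (by simp; omega), getD_set_eq _ _ _ _ (by omega)]
    have key : ∀ i : Fin n, v i * epsCoord r
          ((applyRefl w ((a : ℕ) + 1, ((b : ℕ) : ℤ) + 1)).getD i 0) =
        v i * epsCoord r (w.getD i 0)
          + (if i = a then v a * (epsCoord r (w.getD b 0) - epsCoord r (w.getD a 0)) else 0)
          + (if i = b then v b * (epsCoord r (w.getD a 0) - epsCoord r (w.getD b 0)) else 0) := by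
      intro i
      rw [hent]
      by_cases hib : i = b
      · subst hib
        have : ¬ i = a := fun h => hne (by rw [h])
        simp [this]; ring
      · have h1 : ¬ (b : ℕ) = i := fun h => hib (Fin.ext h.symm)
        by_cases hia : i = a
        · subst hia
          simp [h1, hib]; ring
        · have h2 : ¬ (a : ℕ) = i := fun h => hia (Fin.ext h.symm)
          simp [h1, h2, hia, hib]
    simp only [key, ip_coroot_pos, rootVec_pos, sub_mul, mul_sub, Finset.sum_add_distrib,
      Finset.sum_sub_distrib, mul_ite, ite_mul, mul_one, mul_zero, zero_mul,
      Finset.sum_ite_eq', Finset.mem_univ, if_true]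
    ring
  · have hne : (b : ℕ) ≠ a := by have : (a : ℕ) < b := hab; omega
    have hent : ∀ i : Fin n, (applyRefl w ((a : ℕ) + 1, -(((b : ℕ) : ℤ) + 1))).getD i 0 =
        if (b : ℕ) = i then -w.getD a 0 else if (a : ℕ) = i then -w.getD b 0
          else w.getD i 0 := by
      intro i
      have h : ¬ (0 : ℤ) < -(((b : ℕ) : ℤ) + 1) := by omega
      have h2 : (-(-(((b : ℕ) : ℤ) + 1))).toNat - 1 = b := by omega
      have h3 : ¬ ((a : ℕ) + 1 = (-(-(((b : ℕ) : ℤ) + 1))).toNat) := by omega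
      simp only [applyRefl, h, if_false, h2, h3, Nat.add_sub_cancel]
      rw [getD_set_eq _ _ _ _ (by simp; omega), getD_set_eq _ _ _ _ (by omega)]
    have key : ∀ i : Fin n, v i * epsCoord r
          ((applyRefl w ((a : ℕ) + 1, -(((b : ℕ) : ℤ) + 1))).getD i 0) =
        v i * epsCoord r (w.getD i 0)
          + (if i = a then v a * (-epsCoord r (w.getD b 0) - epsCoord r (w.getD a 0)) else 0)
          + (if i = b then v b * (-epsCoord r (w.getD a 0) - epsCoord r (w.getD b 0)) else 0) := by
      intro i
      rw [hent]
      by_cases hib : i = b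
      · subst hib
        have : ¬ i = a := fun h => hne (by rw [h])
        simp only [if_true, this, if_false, epsCoord_neg]; ring
      · have h1 : ¬ (b : ℕ) = i := fun h => hib (Fin.ext h.symm)
        by_cases hia : i = a
        · subst hia
          simp only [if_true, h1, hib, if_false, epsCoord_neg]; ring
        · have h2 : ¬ (a : ℕ) = i := fun h => hia (Fin.ext h.symm)
          simp [h1, h2, hia, hib]
    simp only [key, ip_coroot_neg a b hab, rootVec_neg, sub_mul, mul_sub, mul_add, add_mul,
      Finset.sum_add_distrib,
      Finset.sum_sub_distrib, mul_ite, ite_mul, mul_one, mul_zero, zero_mul,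
      Finset.sum_ite_eq', Finset.mem_univ, if_true]
    ring
  · have hent : ∀ i : Fin n, (applyRefl w ((a : ℕ) + 1, -(((a : ℕ) : ℤ) + 1))).getD i 0 =
        if (a : ℕ) = i then -w.getD a 0 else w.getD i 0 := by
      intro i
      have h : ¬ (0 : ℤ) < -(((a : ℕ) : ℤ) + 1) := by omega
      have h3 : ((a : ℕ) + 1 = (-(-(((a : ℕ) : ℤ) + 1))).toNat) := by omega
      simp only [applyRefl, h, if_false, ← h3, if_true, Nat.add_sub_cancel]
      rw [getD_set_eq _ _ _ _ (by omega)]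
    have key : ∀ i : Fin n, v i * epsCoord r
          ((applyRefl w ((a : ℕ) + 1, -(((a : ℕ) : ℤ) + 1))).getD i 0) =
        v i * epsCoord r (w.getD i 0)
          + (if i = a then v a * (-2 * epsCoord r (w.getD a 0)) else 0) := by
      intro i
      rw [hent]
      by_cases hia : i = a
      · subst hia
        simp only [if_true, epsCoord_neg]; ring
      · have h2 : ¬ (a : ℕ) = i := fun h => hia (Fin.ext h.symm)
        simp [h2, hia]
    simp only [key, ip_coroot_diag, rootVec_neg, sub_mul, mul_add, add_mul,
      Finset.sum_add_distrib,
      Finset.sum_sub_distrib, mul_ite, ite_mul, mul_one, mul_zero, zero_mul,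
      Finset.sum_ite_eq', Finset.mem_univ, if_true]
    ring

/-- `w(r̂(v)) = (w r)(v) + c w(β)` for the affine reflection `r̂` in `⟨v, β^∨⟩ = c`. -/
lemma wAct_affRefl {n : ℕ} {β : ℕ × ℤ} (hβ : isPosRootC n β) (w : List ℤ)
    (hw : w.length = n) (c : ℤ) (v : Fin n → ℤ) (r : Fin n) :
    wAct n w (affRefl n β c v) r =
      wAct n (applyRefl w β) v r + c * wAct n w (rootVec n β) r := by
  rw [wAct_applyRefl hβ w hw]
  unfold affRefl linRefl
  rw [wAct_sub_mul, wAct_sub_mul]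
  ring

lemma wAct_applyRefl' {n : ℕ} {β : ℕ × ℤ} (hβ : isPosRootC n β) (w : List ℤ)
    (hw : w.length = n) (v : Fin n → ℤ) (r : Fin n) :
    wAct n (applyRefl w β) v r =
      wAct n w v r - ip n v (corootVec n β) * wAct n w (rootVec n β) r := by
  rw [wAct_applyRefl hβ w hw]
  unfold linRefl
  rw [wAct_sub_mul]

/-! ### Telescoping along the selected reflections -/

/-- The weight as a sum over a family `s ∈ S` of column positions `off s` with heights encoded by
vectors `om s`: if the `om s` add up to `2λ`, and twice the level `l_j` of each hyperplane is the
sum of the pairings of `β_j^∨` with those `om s` whose offset is at most `j`, then the weight is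
half the sum of the images of the `om s` under the partial products of reflections. -/
lemma two_mul_wAct_foldr {n : ℕ} {ι : Type*} (S : Finset ι) (off : ι → ℕ)
    (om : ι → Fin n → ℤ) (lv : Fin n → ℤ) (Γ : List (ℕ × ℤ))
    (hroot : ∀ j < Γ.length, isPosRootC n (Γ.getD j (0, 0)))
    (hsum : ∀ i, ∑ s ∈ S, om s i = 2 * lv i)
    (hlev : ∀ j < Γ.length, 2 * ((lCount Γ j : ℕ) : ℤ) =
      ∑ s ∈ S, if off s ≤ j then ip n (om s) (corootVec n (Γ.getD j (0, 0))) else 0)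
    (r : Fin n) (L : List ℕ) : ∀ (_ : L.Pairwise (· < ·)) (_ : ∀ j ∈ L, j < Γ.length)
    (w : List ℤ) (_ : w.length = n),
    2 * wAct n w (L.foldr (fun j v => affRefl n (Γ.getD j (0, 0)) ((lCount Γ j : ℕ) : ℤ) v) lv) r =
      ∑ s ∈ S, wAct n (applyAll w ((L.filter (fun x => x < off s)).map
        (fun j => Γ.getD j (0, 0)))) (om s) r := by
  induction L with
  | nil =>
    intro _ _ w _
    simp only [List.foldr_nil, List.filter_nil, List.map_nil, applyAll, List.foldl_nil,
      wAct_eq_sum]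
    rw [Finset.sum_comm, Finset.mul_sum]
    refine Finset.sum_congr rfl fun i _ => ?_
    rw [← Finset.sum_mul, hsum]; ring
  | cons j L ih =>
    intro hL hlt w hw
    rw [List.pairwise_cons] at hL
    have hj := hlt j (by simp)
    have hr := hroot j hj
    rw [List.foldr_cons, wAct_affRefl hr w hw, mul_add,
      ih hL.2 (fun x hx => hlt x (by simp [hx])) _ (by rw [length_applyRefl, hw]),
      ← mul_assoc, hlev j hj, Finset.sum_mul, ← Finset.sum_add_distrib]
    refine Finset.sum_congr rfl fun s _ => ?_
    by_cases hs : off s ≤ j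
    · -- nothing is selected before `off s`, on either side
      have h0 : L.filter (fun x => x < off s) = [] := by
        rw [List.filter_eq_nil_iff]
        intro x hx
        have := hL.1 x hx
        simp; omega
      have h1 : (j :: L).filter (fun x => x < off s) = [] := by
        rw [List.filter_cons_of_neg (by simpa using hs), h0]
      rw [h0, h1, if_pos hs]
      simp only [List.map_nil, applyAll, List.foldl_nil]
      rw [wAct_applyRefl' hr w hw]
      ring
    · rw [List.filter_cons_of_pos (by simpa using hs), if_neg hs]
      simp [applyAll]

/-! ### Multiplicities of roots in one block -/

/-- The first half `Γ'_2 ⋯ Γ'_k` of `Γ(k)`. -/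
def chainA (k : ℕ) : List (ℕ × ℤ) := ((List.range (k - 1)).map (fun r => gammaPrime (r + 2))).flatten

/-- The second half `Γ_1(k) ⋯ Γ_k(k)` of `Γ(k)`. -/
def chainB (n k : ℕ) : List (ℕ × ℤ) := ((List.range k).map (fun r => gammaJK n (r + 1) k)).flatten

lemma gammaChain_eq (n k : ℕ) : gammaChain n k = chainA k ++ chainB n k := rfl

lemma mem_gammaPrime (j : ℕ) (β : ℕ × ℤ) :
    β ∈ gammaPrime j ↔ 1 ≤ β.1 ∧ β.1 < j ∧ β.2 = -(j : ℤ) := by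
  obtain ⟨a, b⟩ := β
  simp only [gammaPrime, List.mem_map, List.mem_range, Prod.mk.injEq]
  constructor
  · rintro ⟨r, hr, h1, h2⟩; omega
  · rintro ⟨h1, h2, h3⟩; exact ⟨a - 1, by omega, by omega, by omega⟩

lemma mem_gammaJK (n j k : ℕ) (β : ℕ × ℤ) :
    β ∈ gammaJK n j k ↔ (1 ≤ β.1 ∧ β.1 < j ∧ β.2 = -(j : ℤ)) ∨
      (β.1 = j ∧ (k : ℤ) < -β.2 ∧ -β.2 ≤ n) ∨ (β.1 = j ∧ β.2 = -(j : ℤ)) ∨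
      (β.1 = j ∧ (k : ℤ) < β.2 ∧ β.2 ≤ n) := by
  obtain ⟨a, b⟩ := β
  simp only [gammaJK, List.mem_append, mem_gammaPrime, List.mem_map, List.mem_range,
    List.mem_singleton, Prod.mk.injEq, or_assoc]
  refine or_congr Iff.rfl (or_congr ?_ (or_congr Iff.rfl ?_))
  · constructor
    · rintro ⟨r, hr, h1, h2⟩; omega
    · rintro ⟨h1, h2, h3⟩; exact ⟨(-b).toNat - (k + 1), by omega, by omega, by omega⟩
  · constructor
    · rintro ⟨r, hr, h1, h2⟩; omega
    · rintro ⟨h1, h2, h3⟩; exact ⟨n - b.toNat, by omega, by omega, by omega⟩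

lemma mem_chainA (k : ℕ) (β : ℕ × ℤ) :
    β ∈ chainA k ↔ 1 ≤ β.1 ∧ (β.1 : ℤ) < -β.2 ∧ -β.2 ≤ k := by
  simp only [chainA, List.mem_flatten, List.mem_map, List.mem_range, exists_exists_and_eq_and,
    mem_gammaPrime]
  constructor
  · rintro ⟨r, hr, h⟩; omega
  · rintro h; exact ⟨(-β.2).toNat - 2, by omega, by omega⟩

lemma mem_chainB (n k : ℕ) (β : ℕ × ℤ) :
    β ∈ chainB n k ↔ (1 ≤ β.1 ∧ (β.1 : ℤ) ≤ -β.2 ∧ -β.2 ≤ k) ∨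
      (1 ≤ β.1 ∧ β.1 ≤ k ∧ (k : ℤ) < -β.2 ∧ -β.2 ≤ n) ∨
      (1 ≤ β.1 ∧ β.1 ≤ k ∧ (k : ℤ) < β.2 ∧ β.2 ≤ n) := by
  simp only [chainB, List.mem_flatten, List.mem_map, List.mem_range, exists_exists_and_eq_and,
    mem_gammaJK]
  constructor
  · rintro ⟨r, hr, h⟩; omega
  · rintro (h | h | h)
    · exact ⟨(-β.2).toNat - 1, by omega, by omega⟩
    · exact ⟨β.1 - 1, by omega, by omega⟩
    · exact ⟨β.1 - 1, by omega, by omega⟩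

lemma nodup_gammaPrime (j : ℕ) : (gammaPrime j).Nodup := by
  refine List.Nodup.map ?_ List.nodup_range
  intro a b h
  simp only [Prod.mk.injEq] at h
  omega

lemma nodup_gammaJK (n j k : ℕ) (hj : j ≤ k) : (gammaJK n j k).Nodup := by
  unfold gammaJK
  have h1 : ((List.range (n - k)).map (fun r => (j, -((k + 1 + r : ℕ) : ℤ)))).Nodup := by
    refine List.Nodup.map ?_ List.nodup_range
    intro a b h
    simp only [Prod.mk.injEq] at h
    omega
  have h2 : ((List.range (n - k)).map (fun r => (j, ((n - r : ℕ) : ℤ)))).Nodup := by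
    refine List.Nodup.map_on ?_ List.nodup_range
    intro a ha b hb h
    simp only [Prod.mk.injEq, List.mem_range] at h ha hb
    omega
  refine List.Nodup.append (List.Nodup.append (List.Nodup.append (nodup_gammaPrime j) h1 ?_)
    (List.nodup_singleton _) ?_) h2 ?_
  · intro β hβ hβ'
    rw [mem_gammaPrime] at hβ
    simp only [List.mem_map, List.mem_range] at hβ'
    obtain ⟨r, hr, rfl⟩ := hβ'
    simp only at hβ; omega
  · intro β hβ hβ'
    simp only [List.mem_append, mem_gammaPrime, List.mem_map, List.mem_range,
      List.mem_singleton] at hβ hβ'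
    subst hβ'
    rcases hβ with h | ⟨r, hr, h⟩
    · simp only at h; omega
    · simp only [Prod.mk.injEq] at h; omega
  · intro β hβ hβ'
    simp only [List.mem_append, mem_gammaPrime, List.mem_map, List.mem_range,
      List.mem_singleton] at hβ hβ'
    obtain ⟨r, hr, rfl⟩ := hβ'
    simp only [Prod.mk.injEq] at hβ
    rcases hβ with (h | ⟨s, hs, h⟩) | h <;> omega

lemma nodup_chainA (k : ℕ) : (chainA k).Nodup := by
  unfold chainA
  rw [List.nodup_flatten]
  constructor
  · intro l hl
    simp only [List.mem_map] at hl
    obtain ⟨r, _, rfl⟩ := hl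
    exact nodup_gammaPrime _
  · rw [List.pairwise_map]
    refine List.Pairwise.imp ?_ List.pairwise_lt_range
    intro a b hab β h1 h2
    rw [mem_gammaPrime] at h1 h2
    omega

lemma nodup_chainB (n k : ℕ) : (chainB n k).Nodup := by
  unfold chainB
  rw [List.nodup_flatten]
  constructor
  · intro l hl
    simp only [List.mem_map, List.mem_range] at hl
    obtain ⟨r, hr, rfl⟩ := hl
    exact nodup_gammaJK _ _ _ (by omega)
  · rw [List.pairwise_map]
    refine List.Pairwise.imp_of_mem ?_ List.pairwise_lt_range
    intro a b ha hb hab β h1 h2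
    rw [List.mem_range] at ha hb
    rw [mem_gammaJK] at h1 h2
    omega

lemma isPosRootC_of_mem_gammaChain {n k : ℕ} (hk : k ≤ n) {β : ℕ × ℤ}
    (h : β ∈ gammaChain n k) : isPosRootC n β := by
  rw [gammaChain_eq, List.mem_append, mem_chainA, mem_chainB] at h
  unfold isPosRootC
  omega

/-- The pairing of `ω_k` with `β^∨` is the multiplicity of `β` in `Γ(k)`. -/
lemma count_gammaChain {n k : ℕ} (hk : k ≤ n) {β : ℕ × ℤ} (hβ : isPosRootC n β) :
    (((gammaChain n k).count β : ℕ) : ℤ) = ip n (omegaC n k) (corootVec n β) := by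
  rw [gammaChain_eq, List.count_append, (nodup_chainA k).count, (nodup_chainB n k).count]
  simp only [mem_chainA, mem_chainB]
  rcases isPosRootC_cases hβ with ⟨a, b, hab, rfl⟩ | ⟨a, b, hab, rfl⟩ | ⟨a, rfl⟩
  · rw [ip_coroot_pos]
    have : (a : ℕ) < b := hab
    simp only [omegaC]
    split_ifs <;> omega
  · rw [ip_coroot_neg a b hab]
    have : (a : ℕ) < b := hab
    simp only [omegaC]
    split_ifs <;> omega
  · rw [ip_coroot_diag]
    simp only [omegaC]
    split_ifs <;> omega

/-- Each root of the first half of `Γ(k)` also occurs in the second half. -/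
lemma count_gammaChain_of_mem_chainA {n k : ℕ} {β : ℕ × ℤ} (h : β ∈ chainA k) :
    (gammaChain n k).count β = 2 := by
  have hB : β ∈ chainB n k := by
    rw [mem_chainA] at h
    rw [mem_chainB]
    omega
  rw [gammaChain_eq, List.count_append, List.count_eq_one_of_mem (nodup_chainA k) h,
    List.count_eq_one_of_mem (nodup_chainB n k) hB]

lemma count_take_of_nodup {l : List (ℕ × ℤ)} (hl : l.Nodup) {j : ℕ} (hj : j < l.length) :
    (l.take (j + 1)).count (l.getD j (0, 0)) = 1 := by
  refine List.count_eq_one_of_mem (hl.sublist (List.take_sublist _ _)) ?_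
  rw [List.getD_eq_getElem _ _ hj]
  rw [List.mem_take_iff_getElem]
  exact ⟨j, by omega, rfl⟩

/-- The level identity inside one block: a root in the first half of `Γ(k)` appears for the first
of two times, one in the second half for the last time. -/
lemma two_mul_lCount_gammaChain {n k j : ℕ} (hj : j < (gammaChain n k).length) :
    2 * lCount (gammaChain n k) j =
      (if (chainA k).length ≤ j then 2 else 1) *
        (gammaChain n k).count ((gammaChain n k).getD j (0, 0)) := by
  unfold lCount
  by_cases h : (chainA k).length ≤ j
  · rw [if_pos h]
    have hj' : j - (chainA k).length < (chainB n k).length := by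
      rw [gammaChain_eq, List.length_append] at hj; omega
    have hg : (gammaChain n k).getD j (0, 0) =
        (chainB n k).getD (j - (chainA k).length) (0, 0) := by
      rw [gammaChain_eq, List.getD_append_right _ _ _ _ h]
    have hB : (chainB n k).getD (j - (chainA k).length) (0, 0) ∈ chainB n k := by
      rw [List.getD_eq_getElem _ _ hj']; exact List.getElem_mem _
    rw [hg, gammaChain_eq, List.take_append, List.count_append, List.count_append,
      List.take_of_length_le (by omega),
      show j + 1 - (chainA k).length = j - (chainA k).length + 1 by omega,
      count_take_of_nodup (nodup_chainB n k) hj', List.count_eq_one_of_mem (nodup_chainB n k) hB]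
  · rw [if_neg h]
    push Not at h
    have hg : (gammaChain n k).getD j (0, 0) = (chainA k).getD j (0, 0) := by
      rw [gammaChain_eq, List.getD_append _ _ _ _ h]
    have hA : (chainA k).getD j (0, 0) ∈ chainA k := by
      rw [List.getD_eq_getElem _ _ h]; exact List.getElem_mem _
    rw [hg, count_gammaChain_of_mem_chainA hA, gammaChain_eq, List.take_append_of_le_length
      (by omega), count_take_of_nodup (nodup_chainA k) h]

/-! ### Multiplicities of roots in a concatenation of blocks -/

/-- The concatenation `Γ(k 0) Γ(k 1) ⋯ Γ(k (N-1))`. -/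
def blocks (n : ℕ) (k : ℕ → ℕ) (N : ℕ) : List (ℕ × ℤ) :=
  ((List.range N).map (fun t => gammaChain n (k t))).flatten

lemma blocks_succ (n : ℕ) (k : ℕ → ℕ) (N : ℕ) :
    blocks n k (N + 1) = blocks n k N ++ gammaChain n (k N) := by
  simp [blocks, List.range_succ]

lemma length_blocks (n : ℕ) (k : ℕ → ℕ) (N : ℕ) :
    (blocks n k N).length = ∑ t ∈ Finset.range N, (gammaChain n (k t)).length := by
  induction N with
  | zero => simp [blocks]
  | succ N ih => rw [blocks_succ, List.length_append, Finset.sum_range_succ, ih]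

lemma count_blocks (n : ℕ) (k : ℕ → ℕ) (N : ℕ) (β : ℕ × ℤ) :
    (blocks n k N).count β = ∑ t ∈ Finset.range N, (gammaChain n (k t)).count β := by
  induction N with
  | zero => simp [blocks]
  | succ N ih => rw [blocks_succ, List.count_append, Finset.sum_range_succ, ih]

lemma length_blocks_mono (n : ℕ) (k : ℕ → ℕ) {s t : ℕ} (h : s ≤ t) :
    (blocks n k s).length ≤ (blocks n k t).length := by
  rw [length_blocks, length_blocks]
  exact Finset.sum_le_sum_of_subset (by simpa using h)

lemma isPosRootC_blocks {n : ℕ} {k : ℕ → ℕ} (hk : ∀ t, k t ≤ n) {N j : ℕ}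
    (hj : j < (blocks n k N).length) : isPosRootC n ((blocks n k N).getD j (0, 0)) := by
  have hm : (blocks n k N).getD j (0, 0) ∈ blocks n k N := by
    rw [List.getD_eq_getElem _ _ hj]; exact List.getElem_mem _
  simp only [blocks, List.mem_flatten, List.mem_map, exists_exists_and_eq_and] at hm
  obtain ⟨t, _, ht⟩ := hm
  exact isPosRootC_of_mem_gammaChain (hk t) ht

/-- The level identity: `2 l_j` counts, with multiplicity, the half-blocks starting at or before
position `j`, each weighted by the multiplicity of `β_j` in its block. -/
lemma two_mul_lCount_blocks (n : ℕ) (k : ℕ → ℕ) (N : ℕ) : ∀ j < (blocks n k N).length,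
    2 * lCount (blocks n k N) j = ∑ t ∈ Finset.range N,
      ((if (blocks n k t).length ≤ j then
          (gammaChain n (k t)).count ((blocks n k N).getD j (0, 0)) else 0) +
        (if (blocks n k t).length + (chainA (k t)).length ≤ j then
          (gammaChain n (k t)).count ((blocks n k N).getD j (0, 0)) else 0)) := by
  induction N with
  | zero => simp [blocks]
  | succ N ih =>
    intro j hj
    rw [Finset.sum_range_succ]
    by_cases h : j < (blocks n k N).length
    · have hg : (blocks n k (N + 1)).getD j (0, 0) = (blocks n k N).getD j (0, 0) := by
        rw [blocks_succ, List.getD_append _ _ _ _ h]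
      have hl : lCount (blocks n k (N + 1)) j = lCount (blocks n k N) j := by
        unfold lCount
        rw [hg, blocks_succ, List.take_append_of_le_length (by omega)]
      rw [hl, hg, ih j h, if_neg (by omega), if_neg (by omega)]
      simp
    · push Not at h
      rw [blocks_succ, List.length_append] at hj
      have hj' : j - (blocks n k N).length < (gammaChain n (k N)).length := by omega
      have hg : (blocks n k (N + 1)).getD j (0, 0) =
          (gammaChain n (k N)).getD (j - (blocks n k N).length) (0, 0) := by
        rw [blocks_succ, List.getD_append_right _ _ _ _ h]
      have hl : lCount (blocks n k (N + 1)) j =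
          (blocks n k N).count ((blocks n k (N + 1)).getD j (0, 0)) +
            lCount (gammaChain n (k N)) (j - (blocks n k N).length) := by
        unfold lCount
        rw [hg, blocks_succ, List.take_append, List.count_append,
          List.take_of_length_le (by omega),
          show j + 1 - (blocks n k N).length = j - (blocks n k N).length + 1 by omega]
      rw [hl, mul_add, two_mul_lCount_gammaChain hj', ← hg, count_blocks, Finset.mul_sum]
      congr 1
      · refine Finset.sum_congr rfl fun t ht => ?_
        rw [Finset.mem_range] at ht
        have h1 := length_blocks_mono n k (show t + 1 ≤ N by omega)
        rw [blocks_succ, gammaChain_eq, List.length_append, List.length_append] at h1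
        rw [if_pos (by omega), if_pos (by omega), two_mul]
      · rw [if_pos h]
        by_cases h2 : (chainA (k N)).length ≤ j - (blocks n k N).length
        · rw [if_pos h2, if_pos (by omega), two_mul]
        · rw [if_neg h2, if_neg (by omega), one_mul, add_zero]

/-! ### Columns, offsets and the conjugate partition -/

lemma length_applyAll (T : List (ℕ × ℤ)) : ∀ w : List ℤ, (applyAll w T).length = w.length := by
  induction T with
  | nil => intro w; rfl
  | cons t T ih =>
    intro w
    have := ih (applyRefl w t)
    rw [length_applyRefl] at this
    exact this

lemma count_take_sub (r : ℕ) (l : List ℤ) : ∀ k : ℕ,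
    (((l.take k).count (((r + 1 : ℕ)) : ℤ) : ℕ) : ℤ) - ((l.take k).count (-((r + 1 : ℕ) : ℤ)) : ℕ) =
      ∑ i : Fin l.length, (if (i : ℕ) + 1 ≤ k then 1 else 0) * epsCoord r (l.getD i 0) := by
  induction l with
  | nil => intro k; simp
  | cons a l ih =>
    intro k
    cases k with
    | zero => simp
    | succ k =>
      have := ih k
      simp only [List.length_cons]
      rw [Fin.sum_univ_succ]
      simp only [List.take_succ_cons, List.count_cons, Fin.val_zero, Fin.val_succ,
        List.getD_cons_zero, List.getD_cons_succ, add_le_add_iff_right]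
      rw [← this]
      simp only [epsCoord, beq_iff_eq]
      push_cast
      simp only [Nat.zero_le, if_true]
      ring

/-- The content of the column `w[1,k]` is `w(ω_k)`. -/
lemma count_take_eq_wAct {n : ℕ} (w : List ℤ) (hw : w.length = n) (k : ℕ) (r : Fin n) :
    (((w.take k).count ((((r : ℕ) + 1 : ℕ)) : ℤ) : ℕ) : ℤ)
      - ((w.take k).count (-(((r : ℕ) + 1 : ℕ) : ℤ)) : ℕ) = wAct n w (omegaC n k) r := by
  subst hw
  rw [count_take_sub, wAct_eq_sum]
  rfl

lemma sort_filter (J : Finset ℕ) (c : ℕ) :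
    (J.filter (fun x => x < c)).sort (· ≤ ·) = (J.sort (· ≤ ·)).filter (fun x => x < c) := by
  refine List.Perm.eq_of_pairwise' (r := (· ≤ ·)) (Finset.pairwise_sort _ _)
    ((Finset.pairwise_sort J (· ≤ ·)).filter _) ?_
  rw [List.perm_ext_iff_of_nodup (Finset.sort_nodup _ _) ((Finset.sort_nodup _ _).filter _)]
  intro a
  simp

lemma count_pairs (X Y : ℕ → List ℤ) (N : ℕ) (a : ℤ) :
    (((List.range N).map (fun t => [X t, Y t])).flatten.flatten).count a =
      ∑ t ∈ Finset.range N, ((X t).count a + (Y t).count a) := by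
  induction N with
  | zero => simp
  | succ N ih =>
    rw [Finset.sum_range_succ, ← ih]
    simp [List.range_succ]

lemma length_chainA (k : ℕ) :
    (chainA k).length = ∑ j ∈ Finset.Ico 2 (k + 1), (gammaPrime j).length := by
  rw [Finset.sum_Ico_eq_sum_range, show k + 1 - 2 = k - 1 by omega]
  unfold chainA
  generalize k - 1 = m
  induction m with
  | zero => simp
  | succ m ih =>
    rw [Finset.sum_range_succ, ← ih, List.range_succ, add_comm 2 m]
    simp

lemma offsetBlock_eq (n : ℕ) (lam : Fin n → ℕ) {t : ℕ} (ht : t < lamOne n lam) :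
    offsetBlock n lam (lamOne n lam - t) =
      (blocks n (fun s => conj n lam (lamOne n lam - s)) t).length := by
  rw [length_blocks]
  unfold offsetBlock
  refine Finset.sum_nbij' (fun i => lamOne n lam - i) (fun s => lamOne n lam - s) ?_ ?_ ?_ ?_ ?_
  · intro i hi; simp only [Finset.mem_Ico, Finset.mem_range] at hi ⊢; omega
  · intro i hi; simp only [Finset.mem_Ico, Finset.mem_range] at hi ⊢; omega
  · intro i hi; simp only [Finset.mem_Ico] at hi; omega
  · intro i hi; simp only [Finset.mem_range] at hi; omega
  · intro i hi
    simp only [Finset.mem_Ico] at hi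
    rw [show lamOne n lam - (lamOne n lam - i) = i by omega]

lemma conj_le (n : ℕ) (lam : Fin n → ℕ) (i : ℕ) : conj n lam i ≤ n := by
  unfold conj
  exact (Finset.card_filter_le _ _).trans (by simp)

/-- Transposition of the Young diagram: box `(r, i)` lies in row `r` iff it lies in column `i`. -/
lemma lt_conj_iff {n : ℕ} {lam : Fin n → ℕ} (hs : ∀ i j : Fin n, i < j → lam j < lam i)
    (r : Fin n) (i : ℕ) : (r : ℕ) + 1 ≤ conj n lam i ↔ i ≤ lam r := by
  unfold conj
  constructor
  · intro h
    by_contra hlt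
    push Not at hlt
    have hsub : Finset.univ.filter (fun j : Fin n => i ≤ lam j) ⊆ Finset.Iio r := by
      intro j hj
      simp only [Finset.mem_filter, Finset.mem_univ, true_and] at hj
      rw [Finset.mem_Iio]
      by_contra hjr
      rcases (not_lt.mp hjr).lt_or_eq with h1 | h1
      · have := hs r j h1; omega
      · subst h1; omega
    have := Finset.card_le_card hsub
    rw [Fin.card_Iio] at this
    omega
  · intro h
    have hsub : Finset.Iic r ⊆ Finset.univ.filter (fun j : Fin n => i ≤ lam j) := by
      intro j hj
      rw [Finset.mem_Iic] at hj
      simp only [Finset.mem_filter, Finset.mem_univ, true_and]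
      rcases hj.lt_or_eq with h1 | h1
      · have := hs j r h1; omega
      · subst h1; exact h
    have := Finset.card_le_card hsub
    rwa [Fin.card_Iic] at this

lemma lam_le_lamOne {n : ℕ} (lam : Fin n → ℕ) (r : Fin n) : lam r ≤ lamOne n lam :=
  Finset.le_sup (f := lam) (Finset.mem_univ r)

/-- `λ = ∑_i ω_{λ'_i}`. -/
lemma sum_omegaC {n : ℕ} {lam : Fin n → ℕ} (hs : ∀ i j : Fin n, i < j → lam j < lam i)
    (r : Fin n) :
    ∑ t ∈ Finset.range (lamOne n lam), omegaC n (conj n lam (lamOne n lam - t)) r =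
      (lam r : ℤ) := by
  simp only [omegaC, lt_conj_iff hs]
  have hle := lam_le_lamOne lam r
  rw [Finset.sum_boole]
  have : (Finset.range (lamOne n lam)).filter (fun t => lamOne n lam - t ≤ lam r) =
      Finset.Ico (lamOne n lam - lam r) (lamOne n lam) := by
    ext t
    simp only [Finset.mem_filter, Finset.mem_range, Finset.mem_Ico]
    omega
  rw [this, Nat.card_Ico]
  congr 1
  omega

lemma one_le_conj {n : ℕ} {lam : Fin n → ℕ} {i : ℕ} (h1 : 1 ≤ i) (h : i ≤ lamOne n lam) :
    1 ≤ conj n lam i := by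
  unfold conj
  rw [Nat.one_le_iff_ne_zero, Finset.card_ne_zero]
  by_contra hne
  rw [Finset.not_nonempty_iff_eq_empty, Finset.filter_eq_empty_iff] at hne
  have : lamOne n lam < i := by
    unfold lamOne
    rw [Finset.sup_lt_iff (by simpa using Nat.lt_of_lt_of_le Nat.zero_lt_one h1)]
    intro j _
    have := hne (Finset.mem_univ j)
    omega
  omega

/-- Column `C'_{i,2}` of the compressed filling; when `λ'_i = 1` the first half of the block is
empty, so the column `C_{i,1}` replacing it starts at the same offset. -/
lemma fMap_first_col {n : ℕ} (lam : Fin n → ℕ) (w : List ℤ) (J : Finset ℕ) {t : ℕ}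
    (ht : t < lamOne n lam) :
    (if 2 ≤ conj n lam (lamOne n lam - t) then (fMap n lam w J).Cp (lamOne n lam - t) 2
      else (fMap n lam w J).Cu (lamOne n lam - t) 1) =
    (piW n lam w J (blocks n (fun s => conj n lam (lamOne n lam - s)) t).length).take
      (conj n lam (lamOne n lam - t)) := by
  have h1 := one_le_conj (lam := lam) (show 1 ≤ lamOne n lam - t by omega) (by omega)
  rw [← offsetBlock_eq n lam ht]
  by_cases h : 2 ≤ conj n lam (lamOne n lam - t)
  · rw [if_pos h]
    have hv : validP n lam (lamOne n lam - t) 2 := by unfold validP; omega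
    simp [fMap, hv, offsetP]
  · rw [if_neg h]
    have hv : validU n lam (lamOne n lam - t) 1 := by unfold validU; omega
    have hc : conj n lam (lamOne n lam - t) = 1 := by omega
    simp [fMap, hv, offsetU, hc]

lemma fMap_second_col {n : ℕ} (lam : Fin n → ℕ) (w : List ℤ) (J : Finset ℕ) {t : ℕ}
    (ht : t < lamOne n lam) :
    (fMap n lam w J).Cu (lamOne n lam - t) 1 =
    (piW n lam w J ((blocks n (fun s => conj n lam (lamOne n lam - s)) t).length
        + (chainA (conj n lam (lamOne n lam - t))).length)).take
      (conj n lam (lamOne n lam - t)) := by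
  have h1 := one_le_conj (lam := lam) (show 1 ≤ lamOne n lam - t by omega) (by omega)
  rw [← offsetBlock_eq n lam ht, length_chainA]
  have hv : validU n lam (lamOne n lam - t) 1 := by unfold validU; omega
  simp [fMap, hv, offsetU]

lemma length_of_mem_allWindows {n : ℕ} {w : List ℤ} (h : w ∈ allWindows n) : w.length = n := by
  unfold allWindows at h
  rw [Finset.mem_image] at h
  obtain ⟨x, _, rfl⟩ := h
  simp

/-- Theorem 4.5 (2): for every admissible pair `(w,T)` in
`A(λ)` we have `ct(f(w,T)) = w(μ(T))` in `ℤ^n`. -/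
theorem content_eq_weight (n : ℕ) (hn : 2 ≤ n) (lam : Fin n → ℕ)
    (hstrict : ∀ i j : Fin n, i < j → lam j < lam i) (hpos : ∀ i, 0 < lam i) :
    ∀ p ∈ ASet n lam,
      ctQ n lam (fMap n lam p.1 p.2) =
        fun r : Fin n =>
          ((wAct n p.1 (muJ n (lambdaChain n lam) (lamVec n lam) p.2) r : ℤ) : ℚ) := by
  rintro ⟨w, J⟩ ⟨hw, hJ, -⟩
  have hlen := length_of_mem_allWindows hw
  simp only at hw hJ hlen ⊢
  funext r
  set N := lamOne n lam with hN
  set k : ℕ → ℕ := fun t => conj n lam (N - t) with hk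
  have hkn : ∀ t, k t ≤ n := fun t => conj_le n lam _
  have hΓ : lambdaChain n lam = blocks n k N := rfl
  -- one index for each column of the compressed filling: `inl t` for `C'_{i,2}` and `inr t` for
  -- `C_{i,1}`, where `i = λ_1 - t`
  have main := two_mul_wAct_foldr (n := n) ((Finset.range N).disjSum (Finset.range N))
    (Sum.elim (fun t => (blocks n k t).length)
      (fun t => (blocks n k t).length + (chainA (k t)).length))
    (Sum.elim (fun t => omegaC n (k t)) (fun t => omegaC n (k t)))
    (lamVec n lam) (blocks n k N)
    (fun j hj => isPosRootC_blocks hkn hj)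
    (fun i => by
      rw [Finset.sum_disjSum]
      simp only [Sum.elim_inl, Sum.elim_inr]
      rw [sum_omegaC hstrict i, lamVec]; ring)
    (fun j hj => by
      have hr := isPosRootC_blocks hkn hj
      rw [Finset.sum_disjSum]
      simp only [Sum.elim_inl, Sum.elim_inr]
      rw [← Finset.sum_add_distrib]
      have := two_mul_lCount_blocks n k N j hj
      have h2 : (2 * ((lCount (blocks n k N) j : ℕ) : ℤ)) =
        ((2 * lCount (blocks n k N) j : ℕ) : ℤ) := by push_cast; ring
      rw [h2, this, Nat.cast_sum]
      refine Finset.sum_congr rfl fun t _ => ?_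
      rw [← count_gammaChain (hkn t) hr]
      push_cast
      rfl)
    r (J.sort (· ≤ ·)) (Finset.sortedLT_sort J).pairwise
    (fun j hj => by
      rw [Finset.mem_sort] at hj
      exact Finset.mem_range.mp (hJ hj))
    w hlen
  have hcol : ∀ off t, wAct n (applyAll w (((J.sort (· ≤ ·)).filter (fun x => x < off)).map
        (fun j => (blocks n k N).getD j (0, 0)))) (omegaC n (k t)) r =
      ((((piW n lam w J off).take (k t)).count ((((r : ℕ) + 1 : ℕ)) : ℤ) : ℕ) : ℤ)
      - (((piW n lam w J off).take (k t)).count (-(((r : ℕ) + 1 : ℕ) : ℤ)) : ℕ) := by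
    intro off t
    rw [count_take_eq_wAct _ (by rw [piW, length_applyAll, hlen])]
    rw [piW, selChain, sort_filter, hΓ]
  rw [Finset.sum_disjSum] at main
  replace main := main.trans (congrArg₂ (· + ·)
    (Finset.sum_congr rfl fun t _ => hcol (blocks n k t).length t)
    (Finset.sum_congr rfl fun t _ => hcol ((blocks n k t).length + (chainA (k t)).length) t))
  have hct : ∀ a : ℤ, ((compCols n lam (fMap n lam w J)).flatten).count a =
      ∑ t ∈ Finset.range N,
        (((piW n lam w J (blocks n k t).length).take (k t)).count a +
        ((piW n lam w J ((blocks n k t).length + (chainA (k t)).length)).take (k t)).count a) := by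
    intro a
    unfold compCols
    rw [count_pairs]
    refine Finset.sum_congr rfl fun t ht => ?_
    rw [Finset.mem_range] at ht
    rw [fMap_first_col lam w J ht, fMap_second_col lam w J ht]
  unfold ctQ ctCols
  rw [hct, hct, div_eq_iff (by norm_num), mul_comm]
  unfold muJ
  rw [hΓ]
  have mainQ := congrArg (fun z : ℤ => (z : ℚ)) main
  push_cast at mainQ ⊢
  rw [mainQ]
  simp only [Finset.sum_add_distrib, Finset.sum_sub_distrib]
  ring

end HL
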